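/- Let n < p be positive integers and set q = p − n + 1. Let f_1, …, f_q ∈ ℂ[x_1,…,x_{n−1},z] be polynomials such that each f_j is weighted homogeneous of degree d_j with respect to positive integer weights (w_1,…,w_{n−1},w_n). Let P = (r_1,…,r_ℓ) be a partition of k satisfying p − k(p−n+1) + ℓ = 0, and let I(f,P) ⊆ ℂ[x_1,…,x_{n−1},z_1,…,z_ℓ] be the ideal generated by the polynomials π_P(V_i^k(f_j)) for 1 ≤ i ≤ k−1 and 1 ≤ j ≤ q. If the quotient ring ℂ[x_1,…,x_{n−1},z_1,…,z_ℓ]/I(f,P) is finite-dimensional as a ℂ-vector space, then w_1⋯w_{n−1}·w_n^ℓ · dim_ℂ (ℂ[x_1,…,x_{n−1},z_1,…,z_ℓ]/I(f,P)) = ∏_{j=1}^{q} ∏_{i=1}^{k−1} (d_j − i·w_n). -/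

import Mathlib

open MvPolynomial

/-- The `k×k` matrix whose `(a,b)` entry is `z_a^b` for `b ≠ i` and is
`g(x₁,…,x_{n−1},z_a)` for `b = i`. -/
noncomputable def Mmat {n k : ℕ} (g : MvPolynomial (Fin (n - 1) ⊕ Unit) ℂ) (i : Fin k) :
    Matrix (Fin k) (Fin k) (MvPolynomial (Fin (n - 1) ⊕ Fin k) ℂ) :=
  fun a b =>
    if b = i then rename (Sum.map id fun _ => a) g
    else (X (Sum.inr a) : MvPolynomial (Fin (n - 1) ⊕ Fin k) ℂ) ^ (b : ℕ)

/-- The Vandermonde determinant `∏_{a<b} (z_b − z_a)`. -/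
noncomputable def Vdm (n k : ℕ) : MvPolynomial (Fin (n - 1) ⊕ Fin k) ℂ :=
  ∏ p ∈ Finset.univ.filter (fun p : Fin k × Fin k => p.1 < p.2),
    (X (Sum.inr p.2) - X (Sum.inr p.1))

/-!
Let `g` be as many homogeneous elements of positive degree as there are variables, and suppose they
cut out a finite-dimensional quotient. The variables are a regular sequence of the same length, and
an exchange argument in the style of Steinitz turns `g` into a regular sequence as well. Regularity
determines the Hilbert series `P` of the quotient: `∏ (1 - X ^ wᵢ) * P = ∏ (1 - X ^ dⱼ)`. Dividing
by the common power of `1 - X` and evaluating at `1` gives the weighted Bézout formula. It applies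
to the polynomials `π_P(Vᵢᵏ(f_j))` because each `Vᵢᵏ(f_j)` is a quotient of two homogeneous
determinants whose degrees differ by `d_j - i * wₙ`. This degree may be nonpositive, in which case
both sides of the formula vanish or the polynomial is zero; the latter is excluded because a zero
generator could be assigned two different degrees.
-/

section RegularSequences

open scoped Pointwise

open RingTheory.Sequence (IsWeaklyRegular isWeaklyRegular_append_iff
  isWeaklyRegular_singleton_iff)

variable {σ A : Type*} [SetLike σ A] (𝒜 : ℕ → σ)

/-- Homogeneous elements of positive degree, i.e. the homogeneous elements of the irrelevant
ideal; the degree of `0` is ambiguous, so it is not part of the data. -/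
def IsPositiveHomogeneous (a : A) : Prop := ∃ d, 0 < d ∧ a ∈ 𝒜 d

variable {𝒜}

theorem IsPositiveHomogeneous.isHomogeneousElem {a : A} (h : IsPositiveHomogeneous 𝒜 a) :
    SetLike.IsHomogeneousElem 𝒜 a :=
  h.imp fun _ h ↦ h.2

variable [CommRing A] [AddSubgroupClass σ A] [GradedRing 𝒜]

theorem isHomogeneous_colon_singleton {I : Ideal A} (hI : I.IsHomogeneous 𝒜) {b : A} {e : ℕ}
    (hb : b ∈ 𝒜 e) : (I.colon {b}).IsHomogeneous 𝒜 := by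
  intro n x hx
  rw [Submodule.mem_colon_singleton, smul_eq_mul] at hx ⊢
  rw [← DirectSum.coe_decompose_mul_add_of_right_mem 𝒜 hb]
  exact hI _ hx

-- Graded Nakayama, by induction on the degree.
theorem le_of_le_sup_span_singleton_mul {I T : Ideal A} (hI : I.IsHomogeneous 𝒜)
    (hT : T.IsHomogeneous 𝒜) {a : A} (ha : IsPositiveHomogeneous 𝒜 a)
    (h : T ≤ I ⊔ Ideal.span {a} * T) : T ≤ I := by
  obtain ⟨d, hd, ha⟩ := ha
  have hom : ∀ n, ∀ t ∈ T, t ∈ 𝒜 n → t ∈ I := by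
    intro n
    induction n using Nat.strong_induction_on with
    | _ n ih =>
      intro t ht htn
      obtain ⟨y, hy, z, hz, rfl⟩ := Submodule.mem_sup.mp (h ht)
      obtain ⟨s, hs, rfl⟩ := Ideal.mem_span_singleton_mul.mp hz
      rw [← DirectSum.decompose_of_mem_same 𝒜 htn, DirectSum.decompose_add, DirectSum.add_apply,
        AddMemClass.coe_add, DirectSum.coe_decompose_mul_of_left_mem 𝒜 n ha]
      refine I.add_mem (hI n hy) ?_
      split_ifs with hdn
      · exact I.mul_mem_left a (ih (n - d) (by lia) _ (hT _ hs) (SetLike.coe_mem _))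
      · exact I.zero_mem
  intro t ht
  exact hI.mem_iff.mpr fun n ↦ hom n _ (hT n ht) (SetLike.coe_mem _)

theorem torsionBy_quotient_eq_bot_of_eq_smul {I : Ideal A} (hI : I.IsHomogeneous 𝒜) {a b : A}
    {e : ℕ} (ha : IsPositiveHomogeneous 𝒜 a) (hb : b ∈ 𝒜 e)
    (h : Submodule.torsionBy A (A ⧸ I) b = a • Submodule.torsionBy A (A ⧸ I) b) :
    Submodule.torsionBy A (A ⧸ I) b = ⊥ := by
  have mk_mem (x : A) : Ideal.Quotient.mk I x ∈ Submodule.torsionBy A (A ⧸ I) b ↔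
      x ∈ I.colon {b} := by
    rw [Submodule.mem_torsionBy_iff, Submodule.mem_colon_singleton, Algebra.smul_def,
      Ideal.Quotient.algebraMap_eq, ← map_mul, Ideal.Quotient.eq_zero_iff_mem, smul_eq_mul,
      mul_comm]
  have hle : I.colon {b} ≤ I ⊔ Ideal.span {a} * I.colon {b} := by
    intro x hx
    have hxa := (mk_mem x).mpr hx
    rw [h] at hxa
    obtain ⟨y, hy, hyx⟩ := (Submodule.mem_smul_pointwise_iff_exists _ _ _).mp hxa
    obtain ⟨y, rfl⟩ := Ideal.Quotient.mk_surjective y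
    rw [Algebra.smul_def, Ideal.Quotient.algebraMap_eq, ← map_mul, eq_comm,
      Ideal.Quotient.mk_eq_mk_iff_sub_mem] at hyx
    rw [← sub_add_cancel x (a * y)]
    exact Submodule.add_mem_sup hyx
      (Ideal.mul_mem_mul (Ideal.mem_span_singleton_self a) ((mk_mem y).mp hy))
  have hcolon := le_of_le_sup_span_singleton_mul hI (isHomogeneous_colon_singleton hI hb) ha hle
  refine (Submodule.eq_bot_iff _).mpr fun x hx ↦ ?_
  obtain ⟨x, rfl⟩ := Ideal.Quotient.mk_surjective x
  exact Ideal.Quotient.eq_zero_iff_mem.mpr (hcolon ((mk_mem x).mp hx))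

theorem isHomogeneous_ofList {l : List A} (hl : ∀ a ∈ l, IsPositiveHomogeneous 𝒜 a) :
    (Ideal.ofList l).IsHomogeneous 𝒜 :=
  Ideal.homogeneous_span 𝒜 _ fun a ha ↦ (hl a ha).isHomogeneousElem

theorem isWeaklyRegular_perm {l l' : List A} (hl : ∀ a ∈ l, IsPositiveHomogeneous 𝒜 a)
    (h : IsWeaklyRegular A l) (hp : l.Perm l') :
    IsWeaklyRegular A l' := by
  refine h.prototype_perm hp ?_
  intro a b s hs K hK
  have hs' : ∀ c ∈ a :: b :: s, IsPositiveHomogeneous 𝒜 c := fun c hc ↦ hl c (hs.subset hc)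
  obtain ⟨e, -, hb⟩ := hs' b (by simp)
  refine torsionBy_quotient_eq_bot_of_eq_smul ?_ (hs' a (by simp)) hb hK
  rw [smul_eq_mul, Ideal.mul_top]
  exact isHomogeneous_ofList fun c hc ↦ hs' c (by simp_all)

theorem isWeaklyRegular_append_singleton_iff {l : List A} {a : A} :
    IsWeaklyRegular A (l ++ [a]) ↔
      IsWeaklyRegular A l ∧
        ∀ x, a * x ∈ Ideal.ofList l → x ∈ Ideal.ofList l := by
  rw [isWeaklyRegular_append_iff,
    isWeaklyRegular_singleton_iff,
    isSMulRegular_quotient_iff_mem_of_smul_mem]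
  simp only [smul_eq_mul, Ideal.mul_top]

theorem isWeaklyRegular_exchange {a b : A} {l : List A}
    (hl : ∀ c ∈ a :: b :: l, IsPositiveHomogeneous 𝒜 c)
    (h : IsWeaklyRegular A (a :: l))
    (hab : a ∈ (Ideal.ofList (b :: l)).radical) :
    IsWeaklyRegular A (b :: l) := by
  have hal : ∀ c ∈ a :: l, IsPositiveHomogeneous 𝒜 c := fun c hc ↦ hl c (by aesop)
  have hlb : ∀ c ∈ l ++ [b], IsPositiveHomogeneous 𝒜 c := fun c hc ↦ hl c (by aesop)
  obtain ⟨hreg, ha⟩ := isWeaklyRegular_append_singleton_iff.mp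
    (isWeaklyRegular_perm hal h (List.perm_append_singleton a l).symm)
  refine isWeaklyRegular_perm hlb (isWeaklyRegular_append_singleton_iff.mpr ⟨hreg, fun x hx ↦ ?_⟩)
    (List.perm_append_singleton b l)
  obtain ⟨m, hm⟩ := hab
  rw [Ideal.ofList_cons] at hm
  obtain ⟨c, y, hy, hcy⟩ := Ideal.mem_span_singleton_sup.mp hm
  have hpow : ∀ m x, a ^ m * x ∈ Ideal.ofList l → x ∈ Ideal.ofList l := by
    intro m
    induction m with
    | zero => simp
    | succ m ih => exact fun x hx ↦ ih x (ha _ (by rwa [← mul_assoc, ← pow_succ']))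
  refine hpow m x ?_
  rw [← hcy, add_mul, mul_assoc]
  exact add_mem (Ideal.mul_mem_left _ c hx) (Ideal.mul_mem_right x _ hy)

end RegularSequences

section GradedParts

variable {R A : Type*} [CommRing R] [CommRing A] [Algebra R A] (𝒜 : ℕ → Submodule R A)

/-- The image of the degree `n` part of `A` in `A ⧸ I`. For homogeneous `I` these images form the
induced grading of `A ⧸ I`. -/
def gradedPart (I : Ideal A) (n : ℕ) : Submodule R (A ⧸ I) :=
  (𝒜 n).map (Ideal.Quotient.mkₐ R I).toLinearMap

/-- The Hilbert function `n ↦ dim (A ⧸ I)ₙ`; meaningful when the graded parts of `A` are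
finite-dimensional, since `Module.finrank` is `0` in infinite dimension. -/
noncomputable def hilbertFunction (I : Ideal A) (n : ℕ) : ℕ :=
  Module.finrank R (gradedPart 𝒜 I n)

/-- The Hilbert series `∑ dim (A ⧸ I)ₙ Xⁿ`, with integer coefficients so that it can be multiplied
by `1 - X ^ d`. -/
noncomputable def hilbertSeries (I : Ideal A) : PowerSeries ℤ :=
  PowerSeries.mk fun n ↦ (hilbertFunction 𝒜 I n : ℤ)

variable {𝒜}

theorem map_factorₐ_gradedPart {I J : Ideal A} (h : I ≤ J) (n : ℕ) :
    (gradedPart 𝒜 I n).map (Ideal.Quotient.factorₐ R h).toLinearMap = gradedPart 𝒜 J n := by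
  rw [gradedPart, ← Submodule.map_comp]
  rfl

variable [GradedAlgebra 𝒜] {I : Ideal A} (hI : I.IsHomogeneous 𝒜) {g : A} {d : ℕ} (hg : g ∈ 𝒜 d)

include hI hg

theorem mem_of_mem_sup_span_singleton_of_lt {n : ℕ} (hn : n < d) {a : A} (ha : a ∈ 𝒜 n)
    (h : a ∈ I ⊔ Ideal.span {g}) : a ∈ I := by
  rw [sup_comm] at h
  obtain ⟨c, y, hy, rfl⟩ := Ideal.mem_span_singleton_sup.mp h
  rw [← DirectSum.decompose_of_mem_same 𝒜 ha, DirectSum.decompose_add, DirectSum.add_apply,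
    AddMemClass.coe_add, DirectSum.coe_decompose_mul_of_right_mem_of_not_le 𝒜 hg hn.not_ge,
    zero_add]
  exact hI n hy

theorem exists_sub_mul_mem_of_mem_sup_span_singleton {n : ℕ} {a : A} (ha : a ∈ 𝒜 (n + d))
    (h : a ∈ I ⊔ Ideal.span {g}) : ∃ c ∈ 𝒜 n, a - g * c ∈ I := by
  rw [sup_comm] at h
  obtain ⟨c, y, hy, rfl⟩ := Ideal.mem_span_singleton_sup.mp h
  refine ⟨DirectSum.decompose 𝒜 c n, SetLike.coe_mem _, ?_⟩
  have hsub : c * g + y - g * (DirectSum.decompose 𝒜 c n : A) =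
      (DirectSum.decompose 𝒜 y (n + d) : A) := by
    rw [← DirectSum.decompose_of_mem_same 𝒜 ha, DirectSum.decompose_add, DirectSum.add_apply,
      AddMemClass.coe_add, DirectSum.coe_decompose_mul_add_of_right_mem 𝒜 hg]
    ring
  exact hsub ▸ hI _ hy

theorem gradedPart_inf_ker_factorₐ (n : ℕ) :
    gradedPart 𝒜 I (n + d) ⊓ LinearMap.ker (Ideal.Quotient.factorₐ R
        (le_sup_left : I ≤ I ⊔ Ideal.span {g})).toLinearMap =
      (gradedPart 𝒜 I n).map (LinearMap.mulLeft R (Ideal.Quotient.mk I g)) := by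
  ext x
  constructor
  · rintro ⟨⟨a, ha, rfl⟩, hx⟩
    have hxJ : a ∈ I ⊔ Ideal.span {g} := Ideal.Quotient.eq_zero_iff_mem.mp hx
    obtain ⟨c, hc, hac⟩ := exists_sub_mul_mem_of_mem_sup_span_singleton hI hg ha hxJ
    exact ⟨Ideal.Quotient.mk I c, ⟨c, hc, rfl⟩, ((Ideal.Quotient.eq).mpr hac).symm⟩
  · rintro ⟨_, ⟨c, hc, rfl⟩, rfl⟩
    refine ⟨⟨g * c, add_comm n d ▸ SetLike.mul_mem_graded hg hc, rfl⟩, ?_⟩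
    exact Ideal.Quotient.eq_zero_iff_mem.mpr (Ideal.mul_mem_right c _
      (Ideal.mem_sup_right (Ideal.mem_span_singleton_self g)))

omit hI hg

theorem isInternal_gradedPart {J : Ideal A} (hJ : J.IsHomogeneous 𝒜) :
    DirectSum.IsInternal (gradedPart 𝒜 J) := by
  refine (DirectSum.isInternal_submodule_iff_iSupIndep_and_iSup_eq_top _).mpr ⟨fun n ↦ ?_, ?_⟩
  · refine Submodule.disjoint_def.mpr ?_
    rintro _ ⟨a, ha, rfl⟩ hx
    simp only [gradedPart, ← Submodule.map_iSup] at hx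
    obtain ⟨b, hb, hba⟩ := hx
    have hb0 : (⨆ m, ⨆ _ : m ≠ n, 𝒜 m) ≤ LinearMap.ker (GradedAlgebra.proj 𝒜 n) :=
      iSup₂_le fun m hm c hc ↦ DirectSum.decompose_of_mem_ne 𝒜 hc hm
    have hab := hJ n (Ideal.Quotient.eq.mp hba.symm)
    rw [DirectSum.decompose_sub, DirectSum.sub_apply, AddSubgroupClass.coe_sub,
      DirectSum.decompose_of_mem_same 𝒜 ha, show (DirectSum.decompose 𝒜 b n : A) = 0 from hb0 hb,
      sub_zero] at hab
    exact Ideal.Quotient.eq_zero_iff_mem.mpr hab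
  · change ⨆ n, (𝒜 n).map (Ideal.Quotient.mkₐ R J).toLinearMap = ⊤
    rw [← Submodule.map_iSup,
      (DirectSum.Decomposition.isInternal 𝒜).submodule_iSup_eq_top, Submodule.map_top]
    exact LinearMap.range_eq_top.mpr Ideal.Quotient.mk_surjective

end GradedParts

section HilbertSeries

variable {K A : Type*} [Field K] [CommRing A] [Algebra K A] {𝒜 : ℕ → Submodule K A}

instance [∀ n, Module.Finite K (𝒜 n)] (I : Ideal A) (n : ℕ) :
    Module.Finite K (gradedPart 𝒜 I n) :=
  inferInstanceAs (Module.Finite K ((𝒜 n).map (Ideal.Quotient.mkₐ K I).toLinearMap))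

theorem finrank_map_add_finrank_inf_ker {V W : Type*} [AddCommGroup V] [Module K V]
    [AddCommGroup W] [Module K W] (f : V →ₗ[K] W) (P : Submodule K V) [Module.Finite K P] :
    Module.finrank K (P.map f) + Module.finrank K ↥(P ⊓ LinearMap.ker f) = Module.finrank K P := by
  rw [← (f.domRestrict P).finrank_range_add_finrank_ker, LinearMap.range_domRestrict,
    LinearMap.ker_domRestrict, ← Submodule.finrank_map_subtype_eq, Submodule.map_comap_subtype]

variable [GradedAlgebra 𝒜] [∀ n, Module.Finite K (𝒜 n)]

section

variable {I : Ideal A} (hI : I.IsHomogeneous 𝒜) {g : A} {d : ℕ} (hg : g ∈ 𝒜 d)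

include hI hg

theorem hilbertFunction_sup_span_singleton_of_lt {n : ℕ}
    (hn : n < d) : hilbertFunction 𝒜 (I ⊔ Ideal.span {g}) n = hilbertFunction 𝒜 I n := by
  have hle : I ≤ I ⊔ Ideal.span {g} := le_sup_left
  have hker : gradedPart 𝒜 I n ⊓ LinearMap.ker (Ideal.Quotient.factorₐ K hle).toLinearMap = ⊥ := by
    refine (Submodule.eq_bot_iff _).mpr ?_
    rintro _ ⟨⟨a, ha, rfl⟩, hx⟩
    exact Ideal.Quotient.eq_zero_iff_mem.mpr
      (mem_of_mem_sup_span_singleton_of_lt hI hg hn ha (Ideal.Quotient.eq_zero_iff_mem.mp hx))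
  have := finrank_map_add_finrank_inf_ker (Ideal.Quotient.factorₐ K hle).toLinearMap
    (gradedPart 𝒜 I n)
  rwa [hker, finrank_bot, add_zero, map_factorₐ_gradedPart] at this

theorem hilbertFunction_sup_span_singleton_add (n : ℕ) :
    hilbertFunction 𝒜 (I ⊔ Ideal.span {g}) (n + d) +
        Module.finrank K
          ((gradedPart 𝒜 I n).map (LinearMap.mulLeft K (Ideal.Quotient.mk I g))) =
      hilbertFunction 𝒜 I (n + d) := by
  have hle : I ≤ I ⊔ Ideal.span {g} := le_sup_left
  have := finrank_map_add_finrank_inf_ker (Ideal.Quotient.factorₐ K hle).toLinearMap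
    (gradedPart 𝒜 I (n + d))
  rwa [gradedPart_inf_ker_factorₐ hI hg, map_factorₐ_gradedPart] at this

theorem hilbertFunction_add_le (n : ℕ) :
    hilbertFunction 𝒜 I (n + d) ≤
      hilbertFunction 𝒜 (I ⊔ Ideal.span {g}) (n + d) + hilbertFunction 𝒜 I n := by
  rw [← hilbertFunction_sup_span_singleton_add hI hg]
  exact Nat.add_le_add_left (Submodule.finrank_map_le _ _) _

theorem hilbertSeries_sup_span_singleton
    (hreg : ∀ x, g * x ∈ I → x ∈ I) :
    hilbertSeries 𝒜 (I ⊔ Ideal.span {g}) = (1 - PowerSeries.X ^ d) * hilbertSeries 𝒜 I := by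
  have hinj : Function.Injective (LinearMap.mulLeft K (Ideal.Quotient.mk I g)) := by
    refine (injective_iff_map_eq_zero _).mpr fun x hx ↦ ?_
    obtain ⟨x, rfl⟩ := Ideal.Quotient.mk_surjective x
    rw [LinearMap.mulLeft_apply, ← map_mul, Ideal.Quotient.eq_zero_iff_mem] at hx
    exact Ideal.Quotient.eq_zero_iff_mem.mpr (hreg x hx)
  ext n
  rw [sub_mul, one_mul, map_sub, PowerSeries.coeff_X_pow_mul']
  simp only [hilbertSeries, PowerSeries.coeff_mk]
  split_ifs with hn
  · obtain ⟨m, rfl⟩ := Nat.exists_eq_add_of_le' hn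
    rw [Nat.add_sub_cancel, ← hilbertFunction_sup_span_singleton_add hI hg,
      ← (Submodule.equivMapOfInjective _ hinj _).finrank_eq]
    simp [hilbertFunction]
  · rw [hilbertFunction_sup_span_singleton_of_lt hI hg (not_le.mp hn), sub_zero]

end

theorem hilbertSeries_ofList_map {ι : Type*} {g : ι → A} {d : ι → ℕ}
    (hg : ∀ i, g i ∈ 𝒜 (d i)) (s : List ι)
    (hreg : RingTheory.Sequence.IsWeaklyRegular A (s.map g)) :
    hilbertSeries 𝒜 (Ideal.ofList (s.map g)) =
      (s.map fun i ↦ 1 - PowerSeries.X ^ d i).prod * hilbertSeries 𝒜 (⊥ : Ideal A) := by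
  induction s using List.reverseRecOn with
  | nil => simp
  | append_singleton s i ih =>
    rw [List.map_append, List.map_singleton] at hreg ⊢
    obtain ⟨hs, hi⟩ := isWeaklyRegular_append_singleton_iff.mp hreg
    have hhom : (Ideal.ofList (s.map g)).IsHomogeneous 𝒜 := by
      refine Ideal.homogeneous_span 𝒜 _ fun a ha ↦ ?_
      obtain ⟨j, -, rfl⟩ := List.mem_map.mp ha
      exact ⟨d j, hg j⟩
    rw [Ideal.ofList_append, Ideal.ofList_singleton,
      hilbertSeries_sup_span_singleton hhom (hg i) hi, ih hs, List.map_append,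
      List.prod_append, List.map_singleton, List.prod_singleton]
    ring

omit [∀ n, Module.Finite K (𝒜 n)] in
theorem exists_polynomial_hilbertSeries {J : Ideal A} (hJ : J.IsHomogeneous 𝒜)
    [Module.Finite K (A ⧸ J)] :
    ∃ P : Polynomial ℤ, (P : PowerSeries ℤ) = hilbertSeries 𝒜 J ∧
      P.eval 1 = Module.finrank K (A ⧸ J) := by
  have hint := isInternal_gradedPart hJ
  have hfin := WellFoundedGT.finite_ne_bot_of_iSupIndep hint.submodule_iSupIndep
  have : Fintype {n // gradedPart 𝒜 J n ≠ ⊥} := hfin.fintype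
  refine ⟨∑ n ∈ hfin.toFinset, Polynomial.monomial n (hilbertFunction 𝒜 J n : ℤ), ?_, ?_⟩
  · ext n
    simp only [Polynomial.coeff_coe, Polynomial.finsetSum_coeff, Polynomial.coeff_monomial,
      hilbertSeries, PowerSeries.coeff_mk, Finset.sum_ite_eq', Set.Finite.mem_toFinset,
      Set.mem_ofPred_eq, ite_eq_left_iff, not_not]
    intro h
    rw [hilbertFunction, h, finrank_bot, Nat.cast_zero]
  · rw [← (LinearEquiv.ofBijective (DirectSum.coeLinearMap _)
      (DirectSum.isInternal_ne_bot_iff.mpr hint)).finrank_eq,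
      Module.finrank_directSum, Polynomial.eval_finsetSum]
    simp only [Polynomial.eval_monomial, one_pow, mul_one, Nat.cast_sum]
    exact (Finset.sum_subtype _ (by simp) _)

end HilbertSeries

section FiniteQuotients

variable {K A : Type*} [Field K] [CommRing A] [Algebra K A] {𝒜 : ℕ → Submodule K A}
  [GradedAlgebra 𝒜]

theorem eventually_gradedPart_eq_bot {J : Ideal A} (hJ : J.IsHomogeneous 𝒜)
    [Module.Finite K (A ⧸ J)] : ∀ᶠ n in Filter.atTop, gradedPart 𝒜 J n = ⊥ := by
  rw [← Nat.cofinite_eq_atTop]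
  exact WellFoundedGT.finite_ne_bot_of_iSupIndep (isInternal_gradedPart hJ).submodule_iSupIndep

theorem IsPositiveHomogeneous.mem_radical {J : Ideal A} (hJ : J.IsHomogeneous 𝒜)
    [Module.Finite K (A ⧸ J)] {a : A} (ha : IsPositiveHomogeneous 𝒜 a) : a ∈ J.radical := by
  obtain ⟨d, hd, ha⟩ := ha
  obtain ⟨N, hN⟩ := Filter.eventually_atTop.mp (eventually_gradedPart_eq_bot hJ)
  have hmem : Ideal.Quotient.mk J (a ^ N) ∈ gradedPart 𝒜 J (N * d) :=
    ⟨a ^ N, SetLike.pow_mem_graded N ha, rfl⟩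
  rw [hN _ (Nat.le_mul_of_pos_right N hd)] at hmem
  exact ⟨N, Ideal.Quotient.eq_zero_iff_mem.mp hmem⟩

theorem isIntegral_of_mem_zero [Module.Finite K (𝒜 0)] {a : A} (ha : a ∈ 𝒜 0) :
    IsIntegral K a :=
  .of_mem_of_fg (SetLike.GradeZero.subalgebra 𝒜) (Module.Finite.iff_fg.mp ‹_›) a ha

theorem finite_quotient_of_le_radical [Algebra.FiniteType K A] [Module.Finite K (𝒜 0)]
    {J : Ideal A} (h : ∀ a, IsPositiveHomogeneous 𝒜 a → a ∈ J.radical) :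
    Module.Finite K (A ⧸ J) := by
  have hhom : ∀ n, ∀ a ∈ 𝒜 n, IsIntegral K (Ideal.Quotient.mk J a) := by
    intro n a ha
    rcases n.eq_zero_or_pos with rfl | hn
    · exact (isIntegral_of_mem_zero ha).map (Ideal.Quotient.mkₐ K J)
    · obtain ⟨m, hm⟩ := h a ⟨n, hn, ha⟩
      refine IsIntegral.of_pow (n := m + 1) m.succ_pos ?_
      rw [← map_pow, Ideal.Quotient.eq_zero_iff_mem.mpr (J.pow_mem_of_pow_mem hm m.le_succ)]
      exact isIntegral_zero
  have : Algebra.IsIntegral K (A ⧸ J) := by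
    refine ⟨fun x ↦ ?_⟩
    obtain ⟨a, rfl⟩ := Ideal.Quotient.mk_surjective x
    classical
    rw [← DirectSum.sum_support_decompose 𝒜 a, map_sum]
    exact IsIntegral.sum _ fun n _ ↦ hhom n _ (SetLike.coe_mem _)
  exact Algebra.IsIntegral.finite

theorem finite_quotient_of_le_radical_of_finite [Algebra.FiniteType K A] [Module.Finite K (𝒜 0)]
    {I J : Ideal A} (hI : I.IsHomogeneous 𝒜) [Module.Finite K (A ⧸ I)] (h : I ≤ J.radical) :
    Module.Finite K (A ⧸ J) :=
  finite_quotient_of_le_radical fun _ ha ↦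
    Ideal.radical_le_radical_iff.mpr h (ha.mem_radical hI)

theorem finite_quotient_sup_span_singleton [Algebra.FiniteType K A] [Module.Finite K (𝒜 0)]
    {I : Ideal A} (hI : I.IsHomogeneous 𝒜) {a c : A} (ha : SetLike.IsHomogeneousElem 𝒜 a)
    [Module.Finite K (A ⧸ (I ⊔ Ideal.span {a}))] (h : a ∈ (I ⊔ Ideal.span {c}).radical) :
    Module.Finite K (A ⧸ (I ⊔ Ideal.span {c})) := by
  have hIa : (I ⊔ Ideal.span {a}).IsHomogeneous 𝒜 :=
    hI.sup (Ideal.homogeneous_span 𝒜 _ (by rintro _ rfl; exact ha))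
  refine finite_quotient_of_le_radical_of_finite hIa (sup_le ?_ ?_)
  · exact le_sup_left.trans Ideal.le_radical
  · rwa [Ideal.span_singleton_le_iff_mem]

end FiniteQuotients

section CommonParameter

open scoped Polynomial

variable {R A : Type*} [CommRing R] [CommRing A] [Algebra R A]

theorem aeval_homogenize_eq_sum (p : R[X]) (n : ℕ) (T U : A) :
    aeval ![T, U] (p.homogenize n) =
      ∑ ij ∈ Finset.HasAntidiagonal.antidiagonal n, p.coeff ij.1 • (T ^ ij.1 * U ^ ij.2) := by
  rw [Polynomial.homogenize, map_sum]
  refine Finset.sum_congr rfl fun ij _ ↦ ?_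
  simp [aeval_monomial, Finsupp.prod_fintype, Algebra.smul_def]

theorem aeval_homogenize_mem {𝒜 : ℕ → Submodule R A} [GradedAlgebra 𝒜] {D : ℕ} {T U : A}
    (hT : T ∈ 𝒜 D) (hU : U ∈ 𝒜 D) (p : R[X]) (n : ℕ) :
    aeval ![T, U] (p.homogenize n) ∈ 𝒜 (n * D) := by
  rw [aeval_homogenize_eq_sum]
  refine Submodule.sum_mem _ fun ij hij ↦ Submodule.smul_mem _ _ ?_
  rw [← Finset.HasAntidiagonal.mem_antidiagonal.mp hij, add_mul]
  exact SetLike.mul_mem_graded (SetLike.pow_mem_graded _ hT) (SetLike.pow_mem_graded _ hU)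

theorem mem_radical_of_isCoprime_homogenize {I : Ideal A} {p q : R[X]} (hpq : IsCoprime p q)
    {m n : ℕ} (hm : p.natDegree ≤ m) (hn : q.natDegree ≤ n) {T U : A}
    (hp : aeval ![T, U] (p.homogenize m) ∈ I) (hq : aeval ![T, U] (q.homogenize n) ∈ I) :
    U ∈ I.radical := by
  obtain ⟨u, v, huv⟩ := hpq
  have hu : (u * p).homogenize (u.natDegree + v.natDegree + n + m) =
      u.homogenize (u.natDegree + v.natDegree + n) * p.homogenize m :=
    Polynomial.homogenize_mul _ _ (by lia) hm
  have hv : (v * q).homogenize (u.natDegree + v.natDegree + n + m) =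
      v.homogenize (u.natDegree + v.natDegree + m) * q.homogenize n := by
    rw [add_right_comm]
    exact Polynomial.homogenize_mul _ _ (by lia) hn
  refine ⟨u.natDegree + v.natDegree + n + m, ?_⟩
  have h := congrArg (fun r ↦ aeval ![T, U] (r.homogenize (u.natDegree + v.natDegree + n + m))) huv
  simp only [Polynomial.homogenize_add, hu, hv, Polynomial.homogenize_one, map_add, map_mul,
    map_pow, aeval_X, Matrix.cons_val_one, Matrix.cons_val_fin_one] at h
  rw [← h]
  exact I.add_mem (I.mul_mem_left _ hp) (I.mul_mem_left _ hq)

variable {K : Type*} [Field K] [Algebra K A]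

theorem mem_radical_of_homogenize_natDegree {I : Ideal A} {p : K[X]} (hp : 0 < p.natDegree)
    {T U : A} (hU : U ∈ I.radical) (h : aeval ![T, U] (p.homogenize p.natDegree) ∈ I.radical) :
    T ∈ I.radical := by
  have hlead : p.homogenize p.natDegree =
      p.eraseLead.homogenize (p.natDegree - 1) * X 1 + C p.leadingCoeff * X 0 ^ p.natDegree := by
    have hmul := Polynomial.homogenize_mul p.eraseLead 1 (m := p.natDegree - 1) (n := 1)
      p.eraseLead_natDegree_le (by simp)
    rw [mul_one, Polynomial.homogenize_one, pow_one, Nat.sub_add_cancel hp] at hmul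
    nth_rw 1 [← p.eraseLead_add_C_mul_X_pow]
    rw [Polynomial.homogenize_add, Polynomial.homogenize_C_mul, Polynomial.homogenize_X_pow le_rfl,
      hmul, Nat.sub_self, pow_zero, mul_one]
  rw [hlead] at h
  simp only [map_add, map_mul, map_pow, aeval_X, aeval_C, Matrix.cons_val_one,
    Matrix.cons_val_fin_one, Matrix.cons_val_zero] at h
  have hT : algebraMap K A p.leadingCoeff * T ^ p.natDegree ∈ I.radical :=
    (Ideal.add_mem_iff_right _ (Ideal.mul_mem_left _ _ hU)).mp h
  have hunit : IsUnit (algebraMap K A p.leadingCoeff) := by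
    refine (IsUnit.mk0 _ ?_).map _
    exact Polynomial.leadingCoeff_ne_zero.mpr (Polynomial.ne_zero_of_natDegree_gt hp)
  exact I.radical_isRadical ⟨_, (Ideal.unit_mul_mem_iff_mem _ hunit).mp hT⟩

variable {𝒜 : ℕ → Submodule K A} [GradedAlgebra 𝒜] [∀ n, Module.Finite K (𝒜 n)]

theorem exists_hilbertFunction_mul_le {I : Ideal A} (hI : I.IsHomogeneous 𝒜) {V : A} {D : ℕ}
    (hD : 0 < D) (hV : V ∈ 𝒜 D) [Module.Finite K (A ⧸ (I ⊔ Ideal.span {V}))] :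
    ∃ B, ∀ n, hilbertFunction 𝒜 I (n * D) ≤ B := by
  have hIV : (I ⊔ Ideal.span {V}).IsHomogeneous 𝒜 :=
    hI.sup (Ideal.homogeneous_span 𝒜 _ (by rintro _ rfl; exact ⟨D, hV⟩))
  obtain ⟨N, hN⟩ := Filter.eventually_atTop.mp (eventually_gradedPart_eq_bot hIV)
  have hsum : ∀ n ≤ N, hilbertFunction 𝒜 I (n * D) ≤
      ∑ m ∈ Finset.range (N + 1), hilbertFunction 𝒜 I (m * D) := fun n hn ↦
    Finset.single_le_sum_of_canonicallyOrdered (f := fun m ↦ hilbertFunction 𝒜 I (m * D))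
      (by simpa [Nat.lt_succ_iff] using hn)
  refine ⟨∑ m ∈ Finset.range (N + 1), hilbertFunction 𝒜 I (m * D), fun n ↦ ?_⟩
  induction n with
  | zero => exact hsum 0 N.zero_le
  | succ n ih =>
    by_cases hn : n + 1 ≤ N
    · exact hsum _ hn
    · have hzero : hilbertFunction 𝒜 (I ⊔ Ideal.span {V}) (n * D + D) = 0 := by
        rw [hilbertFunction, hN _ (by nlinarith), finrank_bot]
      have hle := hilbertFunction_add_le hI hV (n * D)
      rw [hzero, zero_add] at hle
      rw [add_one_mul]
      exact hle.trans ih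

-- Forms of degree `n` in `T`, `U` have `n + 1` coefficients but values in a graded part of `A ⧸ I`
-- of bounded dimension, so some nonzero form takes a value in `I`.
theorem exists_homogenize_mem {I : Ideal A} (hI : I.IsHomogeneous 𝒜) {V T U : A} {D : ℕ}
    (hD : 0 < D) (hV : V ∈ 𝒜 D) (hT : T ∈ 𝒜 D) (hU : U ∈ 𝒜 D)
    [Module.Finite K (A ⧸ (I ⊔ Ideal.span {V}))] :
    ∃ p : K[X], p ≠ 0 ∧ ∃ n, p.natDegree ≤ n ∧ aeval ![T, U] (p.homogenize n) ∈ I := by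
  obtain ⟨n, hn⟩ := exists_hilbertFunction_mul_le hI hD hV
  let ev : K[X] →ₗ[K] A ⧸ I := (Ideal.Quotient.mkₐ K I).toLinearMap ∘ₗ
    (aeval ![T, U]).toLinearMap ∘ₗ Polynomial.homogenizeLM n
  have hev : ∀ p ∈ Polynomial.degreeLT K (n + 1), ev p ∈ gradedPart 𝒜 I (n * D) :=
    fun p _ ↦ ⟨_, aeval_homogenize_mem hT hU p n, rfl⟩
  have hlt : Module.finrank K (gradedPart 𝒜 I (n * D)) <
      Module.finrank K (Polynomial.degreeLT K (n + 1)) := by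
    rw [(Polynomial.degreeLTEquiv K (n + 1)).finrank_eq, Module.finrank_fin_fun]
    exact Nat.lt_succ_of_le (hn n)
  have : Module.Finite K (Polynomial.degreeLT K (n + 1)) :=
    .equiv (Polynomial.degreeLTEquiv K (n + 1)).symm
  obtain ⟨⟨p, hp⟩, hker, hp0⟩ := (Submodule.ne_bot_iff _).mp
    (LinearMap.ker_ne_bot_of_finrank_lt (f := ev.restrict hev) hlt)
  refine ⟨p, fun h ↦ hp0 (Subtype.ext h), n, ?_, ?_⟩
  · rw [Polynomial.mem_degreeLT] at hp
    exact Polynomial.natDegree_le_of_degree_le (Order.le_of_lt_succ (by exact_mod_cast hp))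
  · exact Ideal.Quotient.eq_zero_iff_mem.mp (congrArg Subtype.val (LinearMap.mem_ker.mp hker))

-- The parameter `c` is a form in `a ^ e` and `b ^ d` chosen coprime to the two forms that vanish
-- modulo `I₁` and `I₂`; avoiding their zeros this way also works over finite fields.
theorem exists_common_parameter [Algebra.FiniteType K A] {I₁ I₂ : Ideal A}
    (h₁ : I₁.IsHomogeneous 𝒜) (h₂ : I₂.IsHomogeneous 𝒜) {a b : A}
    (ha : IsPositiveHomogeneous 𝒜 a) (hb : IsPositiveHomogeneous 𝒜 b)
    [Module.Finite K (A ⧸ (I₁ ⊔ Ideal.span {a}))] [Module.Finite K (A ⧸ (I₂ ⊔ Ideal.span {b}))] :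
    ∃ c, IsPositiveHomogeneous 𝒜 c ∧ Module.Finite K (A ⧸ (I₁ ⊔ Ideal.span {c})) ∧
      Module.Finite K (A ⧸ (I₂ ⊔ Ideal.span {c})) := by
  obtain ⟨d, hd, ha⟩ := ha
  obtain ⟨e, he, hb⟩ := hb
  have hU : a ^ e ∈ 𝒜 (e * d) := SetLike.pow_mem_graded e ha
  have hT : b ^ d ∈ 𝒜 (e * d) := mul_comm d e ▸ SetLike.pow_mem_graded d hb
  have hD : 0 < e * d := Nat.mul_pos he hd
  have := finite_quotient_sup_span_singleton h₁ ⟨d, ha⟩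
    ⟨e, Ideal.mem_sup_right (Ideal.mem_span_singleton_self (a ^ e))⟩
  have := finite_quotient_sup_span_singleton h₂ ⟨e, hb⟩
    ⟨d, Ideal.mem_sup_right (Ideal.mem_span_singleton_self (b ^ d))⟩
  obtain ⟨f, hf0, m, hfm, hf⟩ := exists_homogenize_mem h₁ hD hU hT hU
  obtain ⟨g, hg0, n, hgn, hg⟩ := exists_homogenize_mem h₂ hD hT hT hU
  set φ : K[X] := Polynomial.X * f * g + 1 with hφ
  set c := aeval ![b ^ d, a ^ e] (φ.homogenize φ.natDegree)
  have hφdeg : 0 < φ.natDegree := by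
    rw [hφ, ← Polynomial.C_1, Polynomial.natDegree_add_C, Polynomial.natDegree_mul
      (mul_ne_zero Polynomial.X_ne_zero hf0) hg0, Polynomial.natDegree_X_mul hf0]
    lia
  have hφf : IsCoprime φ f := ⟨1, -(Polynomial.X * g), by rw [hφ]; ring⟩
  have hφg : IsCoprime φ g := ⟨1, -(Polynomial.X * f), by rw [hφ]; ring⟩
  have hcI (I : Ideal A) : c ∈ I ⊔ Ideal.span {c} :=
    Ideal.mem_sup_right (Ideal.mem_span_singleton_self c)
  have hU₁ : a ^ e ∈ (I₁ ⊔ Ideal.span {c}).radical :=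
    mem_radical_of_isCoprime_homogenize hφf le_rfl hfm (hcI I₁) (Ideal.mem_sup_left hf)
  have hU₂ : a ^ e ∈ (I₂ ⊔ Ideal.span {c}).radical :=
    mem_radical_of_isCoprime_homogenize hφg le_rfl hgn (hcI I₂) (Ideal.mem_sup_left hg)
  have hT₂ : b ^ d ∈ (I₂ ⊔ Ideal.span {c}).radical :=
    mem_radical_of_homogenize_natDegree hφdeg hU₂ (Ideal.le_radical (hcI I₂))
  refine ⟨c, ⟨_, Nat.mul_pos hφdeg hD, aeval_homogenize_mem hT hU φ _⟩, ?_, ?_⟩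
  · exact finite_quotient_sup_span_singleton h₁ ⟨_, hU⟩ hU₁
  · exact finite_quotient_sup_span_singleton h₂ ⟨_, hT⟩ hT₂

end CommonParameter

section GradedBezout

theorem prod_mul_eval_one_eq {R ι κ : Type*} [CommRing R] [Fintype ι] [Fintype κ]
    (hcard : Fintype.card ι = Fintype.card κ) {m : ι → ℕ} {n : κ → ℕ} {P Q : Polynomial R}
    (h : (∏ i, (1 - Polynomial.X ^ m i)) * P = (∏ j, (1 - Polynomial.X ^ n j)) * Q) :
    (∏ i, (m i : R)) * P.eval 1 = (∏ j, (n j : R)) * Q.eval 1 := by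
  have hreg : IsLeftRegular (1 - Polynomial.X : Polynomial R) := by
    intro p q hpq
    refine (Polynomial.monic_X_sub_C (1 : R)).isRegular.left (neg_injective ?_)
    simpa only [Polynomial.C_1, ← neg_mul, neg_sub] using hpq
  simp only [← mul_neg_geom_sum, Finset.prod_mul_distrib, Finset.prod_const, Finset.card_univ,
    hcard, mul_assoc] at h
  simpa [Polynomial.eval_prod, Polynomial.eval_geom_sum] using
    congrArg (Polynomial.eval 1) (hreg.pow _ h)

variable {K A : Type*} [Field K] [CommRing A] [Algebra K A] {𝒜 : ℕ → Submodule K A}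
  [GradedAlgebra 𝒜]

theorem isWeaklyRegular_exchange_of_finite {a b : A} {l : List A}
    (ha : IsPositiveHomogeneous 𝒜 a) (hb : IsPositiveHomogeneous 𝒜 b)
    (hl : ∀ c ∈ l, IsPositiveHomogeneous 𝒜 c)
    (h : RingTheory.Sequence.IsWeaklyRegular A (a :: l))
    [Module.Finite K (A ⧸ (Ideal.ofList l ⊔ Ideal.span {b}))] :
    RingTheory.Sequence.IsWeaklyRegular A (b :: l) := by
  refine isWeaklyRegular_exchange (𝒜 := 𝒜)
    (List.forall_mem_cons.mpr ⟨ha, List.forall_mem_cons.mpr ⟨hb, hl⟩⟩) h ?_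
  rw [Ideal.ofList_cons, sup_comm]
  refine ha.mem_radical ((isHomogeneous_ofList hl).sup (Ideal.homogeneous_span 𝒜 _ ?_))
  rintro _ rfl
  exact hb.isHomogeneousElem

theorem ofList_append_cons (xs ys : List A) (a : A) :
    Ideal.ofList (xs ++ a :: ys) = Ideal.ofList (xs ++ ys) ⊔ Ideal.span {a} := by
  rw [Ideal.ofList_append, Ideal.ofList_cons, Ideal.ofList_append, sup_comm (Ideal.span {a}),
    sup_assoc]

theorem ofList_map_toList_univ {ι : Type*} [Fintype ι] (g : ι → A) :
    Ideal.ofList (Finset.univ.toList.map g) = Ideal.span (Set.range g) := by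
  simp [Ideal.ofList, Set.range]

variable [∀ n, Module.Finite K (𝒜 n)] [Algebra.FiniteType K A]

-- The elements of `xs` are traded for those of `gs` one at a time, as in the Steinitz exchange
-- lemma: `x` is first replaced by a parameter `c` that also completes the remaining elements of
-- `gs`, the induction hypothesis is applied with `c` fixed, and then `c` is replaced by `g`.
theorem isWeaklyRegular_of_finite_quotient {xs gs hs : List A} (hlen : xs.length = gs.length)
    (hxs : ∀ a ∈ xs, IsPositiveHomogeneous 𝒜 a) (hgs : ∀ a ∈ gs, IsPositiveHomogeneous 𝒜 a)
    (hhs : ∀ a ∈ hs, IsPositiveHomogeneous 𝒜 a)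
    (hreg : RingTheory.Sequence.IsWeaklyRegular A (xs ++ hs))
    (hx : Module.Finite K (A ⧸ Ideal.ofList (xs ++ hs)))
    (hg : Module.Finite K (A ⧸ Ideal.ofList (gs ++ hs))) :
    RingTheory.Sequence.IsWeaklyRegular A (gs ++ hs) := by
  induction xs generalizing gs hs with
  | nil => rwa [List.length_eq_zero_iff.mp hlen.symm]
  | cons x xs ih =>
    obtain ⟨g, gs, rfl⟩ := List.exists_cons_of_length_eq_add_one hlen.symm
    obtain ⟨hx₀, hxs⟩ := List.forall_mem_cons.mp hxs
    obtain ⟨hg₀, hgs⟩ := List.forall_mem_cons.mp hgs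
    have hxhs := List.forall_mem_append.mpr ⟨hxs, hhs⟩
    have hghs := List.forall_mem_append.mpr ⟨hgs, hhs⟩
    rw [List.cons_append, Ideal.ofList_cons, sup_comm] at hx hg
    obtain ⟨c, hc, hcx, hcg⟩ := exists_common_parameter (isHomogeneous_ofList hxhs)
      (isHomogeneous_ofList hghs) hx₀ hg₀
    have hcxs : RingTheory.Sequence.IsWeaklyRegular A (xs ++ c :: hs) :=
      isWeaklyRegular_perm (List.forall_mem_cons.mpr ⟨hc, hxhs⟩)
        (isWeaklyRegular_exchange_of_finite hx₀ hc hxhs hreg) List.perm_middle.symm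
    rw [← ofList_append_cons] at hcx hcg
    have hchs := List.forall_mem_cons.mpr ⟨hc, hhs⟩
    have hcgs : RingTheory.Sequence.IsWeaklyRegular A (c :: (gs ++ hs)) :=
      isWeaklyRegular_perm (List.forall_mem_append.mpr ⟨hgs, hchs⟩)
        (ih (Nat.succ_injective hlen) hxs hgs hchs hcxs hcx hcg) List.perm_middle
    exact isWeaklyRegular_exchange_of_finite hc hg₀ hghs hcgs

theorem prod_mul_finrank_quotient_span {ι κ : Type*} [Fintype ι] [Fintype κ]
    (hcard : Fintype.card ι = Fintype.card κ) {x : ι → A} {g : κ → A} {m : ι → ℕ} {n : κ → ℕ}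
    (hm : ∀ i, 0 < m i) (hn : ∀ j, 0 < n j) (hx : ∀ i, x i ∈ 𝒜 (m i)) (hg : ∀ j, g j ∈ 𝒜 (n j))
    (hreg : RingTheory.Sequence.IsWeaklyRegular A (Finset.univ.toList.map x))
    [hxfin : Module.Finite K (A ⧸ Ideal.span (Set.range x))]
    [hgfin : Module.Finite K (A ⧸ Ideal.span (Set.range g))] :
    (∏ i, m i) * Module.finrank K (A ⧸ Ideal.span (Set.range g)) =
      (∏ j, n j) * Module.finrank K (A ⧸ Ideal.span (Set.range x)) := by
  have hgreg : RingTheory.Sequence.IsWeaklyRegular A (Finset.univ.toList.map g) := by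
    rw [← ofList_map_toList_univ] at hxfin hgfin
    rw [← List.append_nil (List.map _ _)] at hreg hxfin hgfin ⊢
    exact isWeaklyRegular_of_finite_quotient (𝒜 := 𝒜) (by simp [hcard])
      (List.forall_mem_map.mpr fun i _ ↦ ⟨m i, hm i, hx i⟩)
      (List.forall_mem_map.mpr fun j _ ↦ ⟨n j, hn j, hg j⟩) (by simp) hreg hxfin hgfin
  have homx : (Ideal.span (Set.range x)).IsHomogeneous 𝒜 :=
    Ideal.homogeneous_span 𝒜 _ (by rintro _ ⟨i, rfl⟩; exact ⟨m i, hx i⟩)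
  have homg : (Ideal.span (Set.range g)).IsHomogeneous 𝒜 :=
    Ideal.homogeneous_span 𝒜 _ (by rintro _ ⟨j, rfl⟩; exact ⟨n j, hg j⟩)
  obtain ⟨P, hP, hP1⟩ := exists_polynomial_hilbertSeries homx
  obtain ⟨Q, hQ, hQ1⟩ := exists_polynomial_hilbertSeries homg
  have hHx := hilbertSeries_ofList_map hx _ hreg
  have hHg := hilbertSeries_ofList_map hg _ hgreg
  rw [ofList_map_toList_univ, Finset.prod_map_toList] at hHx hHg
  have key : (∏ i, (1 - Polynomial.X ^ m i)) * Q = (∏ j, (1 - Polynomial.X ^ n j)) * P := by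
    apply Polynomial.coe_injective
    rw [Polynomial.coe_mul, Polynomial.coe_mul, hP, hQ, hHx, hHg]
    simp only [← Polynomial.coeToPowerSeries.ringHom_apply, map_prod, map_sub, map_pow, map_one]
    simp only [Polynomial.coeToPowerSeries.ringHom_apply, Polynomial.coe_X]
    ring
  have := prod_mul_eval_one_eq hcard key
  rw [hP1, hQ1] at this
  exact_mod_cast this

end GradedBezout

section WeightedPolynomials

variable {R σ : Type*} [CommRing R]

theorem isWeaklyRegular_map_X {l : List σ} (hl : l.Nodup) :
    RingTheory.Sequence.IsWeaklyRegular (MvPolynomial σ R)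
      (l.map (X : σ → MvPolynomial σ R)) := by
  have mem_iff (l : List σ) (p : MvPolynomial σ R) :
      p ∈ Ideal.ofList (l.map (X : σ → MvPolynomial σ R)) ↔ ∀ m ∈ p.support, ∃ j ∈ l, m j ≠ 0 := by
    rw [show Ideal.ofList (l.map (X : σ → MvPolynomial σ R)) = Ideal.span (X '' {j | j ∈ l}) by
      simp [Ideal.ofList, Set.image], mem_ideal_span_X_image]
    rfl
  induction l using List.reverseRecOn with
  | nil => exact RingTheory.Sequence.IsWeaklyRegular.nil _ _
  | append_singleton l i ih =>
    obtain ⟨hl, -, hi⟩ := List.nodup_append'.mp hl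
    rw [List.map_append, List.map_singleton, isWeaklyRegular_append_singleton_iff]
    refine ⟨ih hl, fun p hp ↦ ?_⟩
    rw [mem_iff] at hp ⊢
    intro m hm
    obtain ⟨j, hj, hmj⟩ := hp (Finsupp.single i 1 + m)
      (by rwa [mem_support_iff, coeff_X_mul, ← mem_support_iff])
    have hij : i ≠ j := by
      rintro rfl
      exact hi hj (List.mem_singleton_self i)
    exact ⟨j, hj, by simpa [hij] using hmj⟩

theorem ker_aeval_zero :
    RingHom.ker (aeval (0 : σ → R) : MvPolynomial σ R →ₐ[R] R) = idealOfVars σ R := by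
  ext p
  rw [← pow_one (idealOfVars σ R), mem_pow_idealOfVars_iff', RingHom.mem_ker, aeval_zero]
  simp [Finsupp.degree_eq_zero_iff, constantCoeff_eq]

variable (R σ) in
theorem finrank_quotient_idealOfVars [Nontrivial R] :
    Module.finrank R (MvPolynomial σ R ⧸ idealOfVars σ R) = 1 := by
  have hsurj : Function.Surjective (aeval (0 : σ → R) : MvPolynomial σ R →ₐ[R] R) :=
    fun c ↦ ⟨C c, by simp⟩
  rw [← ker_aeval_zero, (Ideal.quotientKerAlgEquivOfSurjective hsurj).toLinearEquiv.finrank_eq,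
    Module.finrank_self]

variable {w : σ → ℕ}

theorem isWeightedHomogeneous_natCast_iff {p : MvPolynomial σ R} {n : ℕ} :
    IsWeightedHomogeneous (fun i ↦ (w i : ℤ)) p n ↔ IsWeightedHomogeneous w p n := by
  simp only [IsWeightedHomogeneous, Finsupp.weight_apply]
  refine forall₂_congr fun m _ ↦ ?_
  rw [← Nat.cast_inj (R := ℤ)]
  simp [Finsupp.sum]

theorem exists_natCast_of_isWeightedHomogeneous {p : MvPolynomial σ R} {d : ℤ}
    (hp : IsWeightedHomogeneous (fun i ↦ (w i : ℤ)) p d) (hp0 : p ≠ 0) : ∃ n : ℕ, n = d := by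
  obtain ⟨m, hm⟩ := ne_zero_iff.mp hp0
  rw [← hp hm, Finsupp.weight_apply]
  exact ⟨m.sum fun i c ↦ c • w i, by simp [Finsupp.sum]⟩

variable {K κ : Type*} [Field K]

theorem eq_top_of_isWeightedHomogeneous_zero {p : MvPolynomial σ K}
    {I : Ideal (MvPolynomial σ K)} (hw : ∀ i, 0 < w i) (hp : IsWeightedHomogeneous w p 0)
    (hp0 : p ≠ 0) (hpI : p ∈ I) : I = ⊤ := by
  rw [← hp.weightedHomogeneousComponent_same,
    weightedHomogeneousComponent_zero _ fun i ↦ (hw i).ne'] at hpI hp0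
  exact I.eq_top_of_isUnit_mem hpI ((isUnit_iff_ne_zero.mpr (by simpa using hp0)).map C)

variable [Fintype σ] [Fintype κ] (hw : ∀ i, 0 < w i)

include hw

theorem prod_weight_mul_finrank_quotient_span (hcard : Fintype.card σ = Fintype.card κ)
    {g : κ → MvPolynomial σ K} {n : κ → ℕ} (hn : ∀ j, 0 < n j)
    (hg : ∀ j, IsWeightedHomogeneous w (g j) (n j))
    [Module.Finite K (MvPolynomial σ K ⧸ Ideal.span (Set.range g))] :
    (∏ i, w i) * Module.finrank K (MvPolynomial σ K ⧸ Ideal.span (Set.range g)) = ∏ j, n j := by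
  let := weightedGradedAlgebra K w
  have (m : ℕ) : Module.Finite K (weightedHomogeneousSubmodule K w m) :=
    Module.Finite.iff_fg.mpr (weightedHomogeneousSubmodule_fg K w (fun i ↦ (hw i).ne') m)
  have : Module.Finite K (MvPolynomial σ K ⧸ idealOfVars σ K) :=
    Module.finite_of_finrank_eq_succ (finrank_quotient_idealOfVars K σ)
  rw [prod_mul_finrank_quotient_span (𝒜 := weightedHomogeneousSubmodule K w) hcard hw hn
    (isWeightedHomogeneous_X K w) hg (isWeaklyRegular_map_X (Finset.nodup_toList _)),
    finrank_quotient_idealOfVars, mul_one]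

theorem ne_zero_of_finite_quotient_span (hcard : Fintype.card σ = Fintype.card κ)
    {g : κ → MvPolynomial σ K} {n : κ → ℕ} (hn : ∀ j, 0 < n j)
    (hg : ∀ j, IsWeightedHomogeneous w (g j) (n j))
    [Module.Finite K (MvPolynomial σ K ⧸ Ideal.span (Set.range g))] (j : κ) : g j ≠ 0 := by
  classical
  intro hj
  -- A zero generator has every degree, whereas the dimension determines the product of the degrees.
  have hlt : ∏ i, n i < ∏ i, Function.update n j (n j + 1) i := by
    refine Finset.prod_lt_prod (fun i _ ↦ hn i) (fun i _ ↦ ?_) ⟨j, Finset.mem_univ j, by simp⟩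
    exact le_update_iff.mpr ⟨Nat.le_succ _, fun _ _ ↦ le_rfl⟩ i
  refine hlt.ne ?_
  rw [← prod_weight_mul_finrank_quotient_span hw hcard hn hg,
    ← prod_weight_mul_finrank_quotient_span hw hcard (g := g)]
  · exact (Function.forall_update_iff n fun _ m ↦ 0 < m).mpr ⟨Nat.succ_pos _, fun i _ ↦ hn i⟩
  · refine (Function.forall_update_iff n fun i m ↦ IsWeightedHomogeneous w (g i) m).mpr
      ⟨hj ▸ isWeightedHomogeneous_zero K w _, fun i _ ↦ hg i⟩

theorem prod_weight_mul_finrank_quotient_span_int (hcard : Fintype.card σ = Fintype.card κ)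
    {g : κ → MvPolynomial σ K} {d : κ → ℤ}
    (hg : ∀ j, IsWeightedHomogeneous (fun i ↦ (w i : ℤ)) (g j) (d j))
    [Module.Finite K (MvPolynomial σ K ⧸ Ideal.span (Set.range g))] :
    (∏ i, (w i : ℤ)) * Module.finrank K (MvPolynomial σ K ⧸ Ideal.span (Set.range g)) =
      ∏ j, d j := by
  by_cases hconst : ∃ j, g j ≠ 0 ∧ d j = 0
  · obtain ⟨j, hj, hd⟩ := hconst
    have hgj := hg j
    rw [hd, ← Nat.cast_zero, isWeightedHomogeneous_natCast_iff] at hgj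
    rw [eq_top_of_isWeightedHomogeneous_zero hw hgj hj (Ideal.subset_span (Set.mem_range_self j)),
      Finset.prod_eq_zero (Finset.mem_univ j) hd, Module.finrank_zero_of_subsingleton,
      Nat.cast_zero, mul_zero]
  · have hdeg (j : κ) : ∃ n : ℕ, 0 < n ∧ IsWeightedHomogeneous w (g j) n ∧ (g j ≠ 0 → n = d j) := by
      by_cases hj : g j = 0
      · exact ⟨1, one_pos, hj ▸ isWeightedHomogeneous_zero K w 1, fun h ↦ absurd hj h⟩
      · obtain ⟨n, hn⟩ := exists_natCast_of_isWeightedHomogeneous (hg j) hj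
        refine ⟨n, Nat.pos_of_ne_zero ?_, isWeightedHomogeneous_natCast_iff.mp (hn ▸ hg j),
          fun _ ↦ hn⟩
        rintro rfl
        exact hconst ⟨j, hj, hn.symm⟩
    choose n hn hgn hnd using hdeg
    have hd (j : κ) : n j = d j := hnd j (ne_zero_of_finite_quotient_span hw hcard hn hgn j)
    rw [← Finset.prod_congr rfl fun j _ ↦ hd j]
    exact_mod_cast prod_weight_mul_finrank_quotient_span hw hcard hn hgn

end WeightedPolynomials

section DividedVandermonde

theorem mem_graded_of_mul_mem_graded {σ A M : Type*} [CommRing A] [SetLike σ A]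
    [AddSubgroupClass σ A] [AddRightCancelMonoid M] [DecidableEq M] {𝒜 : M → σ} [GradedRing 𝒜]
    {a b : A} {m n : M} (hb : b ∈ 𝒜 n) (hb₀ : b ∈ nonZeroDivisors A)
    (hab : a * b ∈ 𝒜 (m + n)) : a ∈ 𝒜 m := by
  have h := DirectSum.coe_decompose_mul_add_of_right_mem 𝒜 (i := m) (a := a) hb
  rw [DirectSum.decompose_of_mem_same 𝒜 hab] at h
  rw [(mul_cancel_right_mem_nonZeroDivisors hb₀).mp h]
  exact SetLike.coe_mem _

variable {R M σ τ : Type*} [CommRing R]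

theorem isWeightedHomogeneous_rename [AddCommMonoid M] {u : σ → M} {v : τ → M} {φ : σ → τ}
    (hφ : v ∘ φ = u) {p : MvPolynomial σ R} {m : M} (hp : IsWeightedHomogeneous u p m) :
    IsWeightedHomogeneous v (rename φ p) m := by
  intro e he
  obtain ⟨u, rfl, hu⟩ := coeff_rename_ne_zero φ p e he
  rw [← hp hu, Finsupp.weight_apply, Finsupp.weight_apply,
    Finsupp.sum_mapDomain_index (by simp) (by simp [add_smul]), ← hφ]
  rfl

theorem isWeightedHomogeneous_det [AddCommMonoid M] {n : Type*} [Fintype n] [DecidableEq n]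
    {w : σ → M} {A : Matrix n n (MvPolynomial σ R)} {m : n → M}
    (hA : ∀ a b, IsWeightedHomogeneous w (A a b) (m b)) :
    IsWeightedHomogeneous w A.det (∑ b, m b) := by
  rw [Matrix.det_apply']
  refine IsWeightedHomogeneous.sum _ _ _ fun s _ ↦ ?_
  have h := (IsWeightedHomogeneous.prod Finset.univ _ m fun b _ ↦ hA (s b) b).C_mul
    ((Equiv.Perm.sign s : ℤ) : R)
  simpa using h

variable [AddCommGroup M] {k : ℕ} {w : σ → M} {v : M}

theorem isWeightedHomogeneous_vandermonde (a b : Fin k) :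
    IsWeightedHomogeneous (Sum.elim w fun _ ↦ v)
      (Matrix.vandermonde (fun a : Fin k ↦ (X (Sum.inr a) : MvPolynomial (σ ⊕ Fin k) R)) a b)
      ((b : ℕ) • v) :=
  (isWeightedHomogeneous_X R (Sum.elim w fun _ ↦ v) (Sum.inr a)).pow b

theorem isWeightedHomogeneous_of_det_updateCol_vandermonde [IsDomain R]
    {g : MvPolynomial (σ ⊕ Unit) R} {m : M}
    (hg : IsWeightedHomogeneous (Sum.elim w fun _ ↦ v) g m) {i : Fin k}
    {V : MvPolynomial (σ ⊕ Fin k) R}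
    (hV : ((Matrix.vandermonde fun a : Fin k ↦ X (Sum.inr a)).updateCol i fun a ↦
        rename (Sum.map id fun _ ↦ a) g).det =
      V * (Matrix.vandermonde fun a : Fin k ↦ X (Sum.inr a)).det) :
    IsWeightedHomogeneous (Sum.elim w fun _ ↦ v) V (m - (i : ℕ) • v) := by
  classical
  let := weightedGradedAlgebra R (Sum.elim w fun _ : Fin k ↦ v)
  refine mem_graded_of_mul_mem_graded
    (𝒜 := weightedHomogeneousSubmodule R (Sum.elim w fun _ : Fin k ↦ v))
    (isWeightedHomogeneous_det isWeightedHomogeneous_vandermonde) ?_ ?_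
  · rw [mem_nonZeroDivisors_iff_ne_zero, Matrix.det_vandermonde_ne_zero_iff]
    exact (X_injective (R := R)).comp Sum.inr_injective
  · have hdeg : m - (i : ℕ) • v + ∑ b : Fin k, (b : ℕ) • v =
        ∑ b, Function.update (fun b : Fin k ↦ (b : ℕ) • v) i m b := by
      rw [Finset.sum_update_of_mem (Finset.mem_univ i),
        Finset.sum_eq_add_sum_sdiff_singleton_of_mem (Finset.mem_univ i)]
      abel
    rw [← hV, hdeg]
    refine isWeightedHomogeneous_det fun a b ↦ ?_
    rw [Matrix.updateCol_apply, Function.update_apply]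
    split_ifs with h
    · exact isWeightedHomogeneous_rename (by ext (_ | _) <;> rfl) hg
    · exact isWeightedHomogeneous_vandermonde a b

end DividedVandermonde

section BlockCollapse

@[to_additive]
theorem prod_fin_val_ne_zero {M : Type*} [CommMonoid M] (k : ℕ) (F : ℕ → M) :
    ∏ i : {i : Fin k // (i : ℕ) ≠ 0}, F i = ∏ i ∈ Finset.Icc 1 (k - 1), F i := by
  refine Finset.prod_bij (fun i _ ↦ ((i : Fin k) : ℕ)) (fun i _ ↦ ?_) (fun i _ j _ h ↦ ?_)
    (fun m hm ↦ ?_) fun _ _ ↦ rfl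
  · have := i.1.isLt
    have := i.2
    rw [Finset.mem_Icc]
    omega
  · exact Subtype.ext (Fin.ext h)
  · rw [Finset.mem_Icc] at hm
    exact ⟨⟨⟨m, by omega⟩, by simp only; omega⟩, Finset.mem_univ _, rfl⟩

theorem card_fin_val_ne_zero (k : ℕ) : Fintype.card {i : Fin k // (i : ℕ) ≠ 0} = k - 1 := by
  rw [← Finset.card_univ, Finset.card_eq_sum_ones, sum_fin_val_ne_zero k fun _ ↦ 1,
    ← Finset.card_eq_sum_ones, Nat.card_Icc, Nat.add_sub_cancel]

theorem Mmat_eq_updateCol {n k : ℕ} (g : MvPolynomial (Fin (n - 1) ⊕ Unit) ℂ) (i : Fin k) :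
    Mmat g i = (Matrix.vandermonde fun a : Fin k ↦ X (Sum.inr a)).updateCol i fun a ↦
      rename (Sum.map id fun _ ↦ a) g := by
  ext1 a b
  rw [Matrix.updateCol_apply]
  rfl

theorem Vdm_eq_det_vandermonde (n k : ℕ) :
    Vdm n k = (Matrix.vandermonde fun a : Fin k ↦ X (Sum.inr a)).det := by
  rw [Vdm, Matrix.det_vandermonde, ← Finset.univ_product_univ, Finset.prod_filter,
    Finset.prod_product]
  refine Finset.prod_congr rfl fun a _ ↦ ?_
  rw [← Finset.prod_filter, Finset.filter_lt_eq_Ioi]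

theorem mul_sub_one_eq_add {n p k ℓ : ℕ} (hn : 0 < n) (hnp : n < p)
    (hkl : (p : ℤ) - (k : ℤ) * ((p : ℤ) - (n : ℤ) + 1) + (ℓ : ℤ) = 0) :
    (p - n + 1) * (k - 1) = n - 1 + ℓ := by
  obtain _ | k := k
  · omega
  · zify [hn, hnp.le]
    push_cast at hkl ⊢
    linarith

end BlockCollapse

theorem stmt0_general {K ι κ τ : Type*} [Field K] [Fintype ι] [Fintype κ] [Fintype τ]
    {f : κ → MvPolynomial (ι ⊕ Unit) K} {d : κ → ℕ} {w : ι → ℕ} {wn : ℕ}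
    (hw : ∀ m, 0 < w m) (hwn : 0 < wn)
    (hf : ∀ j, (f j).IsWeightedHomogeneous (Sum.elim w fun _ ↦ wn) (d j))
    {k : ℕ} (hcard : Fintype.card κ * (k - 1) = Fintype.card ι + Fintype.card τ)
    (β : Fin k → τ) {V : κ → Fin k → MvPolynomial (ι ⊕ Fin k) K}
    (hV : ∀ j i, ((Matrix.vandermonde fun a : Fin k ↦ X (Sum.inr a)).updateCol i fun a ↦
        rename (Sum.map id fun _ ↦ a) (f j)).det =
      V j i * (Matrix.vandermonde fun a : Fin k ↦ X (Sum.inr a)).det)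
    {I : Ideal (MvPolynomial (ι ⊕ τ) K)}
    (hI : I = Ideal.span
      {P | ∃ (j : κ) (i : Fin k), (i : ℕ) ≠ 0 ∧ P = rename (Sum.map id β) (V j i)})
    [Module.Finite K (MvPolynomial (ι ⊕ τ) K ⧸ I)] :
    ((∏ m, w m : ℕ) : ℤ) * (wn : ℤ) ^ Fintype.card τ *
        (Module.finrank K (MvPolynomial (ι ⊕ τ) K ⧸ I) : ℤ) =
      ∏ j, ∏ i ∈ Finset.Icc 1 (k - 1), ((d j : ℤ) - (i : ℤ) * (wn : ℤ)) := by
  let u : ι ⊕ τ → ℕ := Sum.elim w fun _ ↦ wn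
  let g (x : κ × {i : Fin k // (i : ℕ) ≠ 0}) : MvPolynomial (ι ⊕ τ) K :=
    rename (Sum.map id β) (V x.1 x.2)
  have hu (x : ι ⊕ τ) : 0 < u x := Sum.rec hw (fun _ ↦ hwn) x
  have hg (x : κ × {i : Fin k // (i : ℕ) ≠ 0}) :
      IsWeightedHomogeneous (fun y ↦ (u y : ℤ)) (g x) (d x.1 - (x.2 : ℕ) * (wn : ℤ)) := by
    have hfℤ : IsWeightedHomogeneous (Sum.elim (fun m ↦ (w m : ℤ)) fun _ ↦ (wn : ℤ)) (f x.1)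
        (d x.1 : ℤ) := by
      rw [show (Sum.elim (fun m ↦ (w m : ℤ)) fun _ ↦ (wn : ℤ)) =
        fun y ↦ ((Sum.elim w fun _ ↦ wn) y : ℤ) by ext (_ | _) <;> rfl]
      exact isWeightedHomogeneous_natCast_iff.mpr (hf x.1)
    rw [← nsmul_eq_mul]
    exact isWeightedHomogeneous_rename (by ext (_ | _) <;> rfl)
      (isWeightedHomogeneous_of_det_updateCol_vandermonde hfℤ (hV x.1 x.2))
  have hspan : I = Ideal.span (Set.range g) := by
    rw [hI]
    congr 1
    ext P
    simp [g, eq_comm]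
  subst hspan
  have hcard' : Fintype.card (ι ⊕ τ) = Fintype.card (κ × {i : Fin k // (i : ℕ) ≠ 0}) := by
    rw [Fintype.card_sum, Fintype.card_prod, card_fin_val_ne_zero, hcard]
  have h := prod_weight_mul_finrank_quotient_span_int hu hcard' hg
  rw [Fintype.prod_sum_type, Fintype.prod_prod_type, Fintype.prod_congr _ _ fun j ↦
    prod_fin_val_ne_zero k fun i ↦ (d j : ℤ) - (i : ℤ) * (wn : ℤ)] at h
  simpa [u] using h

/-- the weighted Bezout formula
`w₁⋯w_{n−1}·wₙ^ℓ · dim_ℂ ℂ[x,z₁,…,z_ℓ]/I(f,P) = ∏_{j=1}^{q} ∏_{i=1}^{k−1} (d_j − i·wₙ)`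
for the ideal `I(f,P)` generated by the images `π_P(Vᵢᵏ(f_j))` (`1 ≤ i ≤ k−1`,
`1 ≤ j ≤ q`) under the block-collapse homomorphism `π_P = rename (Sum.map id β)`,
where the blocks of the partition `P = (r₁,…,r_ℓ)` of `k` are encoded as the fibers of
the monotone map `β : Fin k → Fin ℓ` with fiber sizes `r`. -/
theorem stmt0 (n p : ℕ) (hn : 0 < n) (hnp : n < p)
    (q : ℕ) (hq : q = p - n + 1)
    (f : Fin q → MvPolynomial (Fin (n - 1) ⊕ Unit) ℂ)
    (d : Fin q → ℕ) (w : Fin (n - 1) → ℕ) (wn : ℕ)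
    (hw : ∀ m, 0 < w m) (hwn : 0 < wn)
    (hf : ∀ j, (f j).IsWeightedHomogeneous (Sum.elim w fun _ => wn) (d j))
    (k ℓ : ℕ) (r : Fin ℓ → ℕ)
    (hr1 : ∀ m, 1 ≤ r m) (hrmono : Antitone r) (hrsum : ∑ m, r m = k)
    (hkl : (p : ℤ) - (k : ℤ) * ((p : ℤ) - (n : ℤ) + 1) + (ℓ : ℤ) = 0)
    (β : Fin k → Fin ℓ) (hβmono : Monotone β)
    (hβcard : ∀ m, (Finset.univ.filter fun a => β a = m).card = r m)
    (V : Fin q → Fin k → MvPolynomial (Fin (n - 1) ⊕ Fin k) ℂ)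
    (hV : ∀ j i, (Mmat (f j) i).det = V j i * Vdm n k)
    (I : Ideal (MvPolynomial (Fin (n - 1) ⊕ Fin ℓ) ℂ))
    (hI : I = Ideal.span
      {P | ∃ (j : Fin q) (i : Fin k), (i : ℕ) ≠ 0 ∧
        P = rename (Sum.map (id : Fin (n - 1) → Fin (n - 1)) β) (V j i)})
    (hfin : FiniteDimensional ℂ (MvPolynomial (Fin (n - 1) ⊕ Fin ℓ) ℂ ⧸ I)) :
    ((∏ m, w m : ℕ) : ℤ) * (wn : ℤ) ^ ℓ *
        (Module.finrank ℂ (MvPolynomial (Fin (n - 1) ⊕ Fin ℓ) ℂ ⧸ I) : ℤ) =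
      ∏ j, ∏ i ∈ Finset.Icc 1 (k - 1), ((d j : ℤ) - (i : ℤ) * (wn : ℤ)) := by
  subst hq hI
  simp only [Mmat_eq_updateCol, Vdm_eq_det_vandermonde] at hV
  simpa using stmt0_general hw hwn hf (by simpa using mul_sub_one_eq_add hn hnp hkl) β hV rfl
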